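/- arXiv:2406.08240 — 2 statements merged into one kernel-verified Lean document; each statement's English description precedes it below -/
import Mathlib

section
/- Let B and C be monoids such that C is right cancellative (for all a, b, c ∈ C, a·c = b·c implies a = b). Let f : B → C be a monoid homomorphism and t : B → C a function such that the pointwise product t·f is a monoid homomorphism. Then for all x, y ∈ B one has t(x·y)·f(x) = t(x)·f(x)·t(y). Consequently every horizontally composable pair of 2-cells with codomain a right-cancellative monoid satisfies the middle-interchange (naturality) condition. -/
/-- If `C` is a right-cancellative monoid, `f : B → C` is a monoid homomorphism
and `t : B → C` is a function such that the pointwise product `t·f` is a monoid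
homomorphism, then `t (x*y) * f x = t x * f x * t y` for all `x y : B`; hence
every horizontally composable pair of 2-cells with codomain a right-cancellative
monoid satisfies the middle-interchange (naturality) condition. -/
theorem natural_of_rightCancel {B C : Type*} [Monoid B] [Monoid C]
    (hC : ∀ a b c : C, a * c = b * c → a = b)
    (f : B →* C) (t : B → C) (g : B →* C) (hg : ∀ x, g x = t x * f x) :
    ∀ x y : B, t (x * y) * f x = t x * f x * t y := by
  intro x y
  apply hC _ _ (f y)
  have h := g.map_mul x y
  rw [hg, hg, hg, map_mul] at h
  simpa only [mul_assoc] using h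
end

section
/- Let M be a monoid (multiplicative, with unit 1) and let a 2-cell structure over M be given by: a type H, maps d, c : H → M, maps z, z₋, z⁺ : M → H, and a vertical addition add : H → H → H, satisfying: d(z f) = f = c(z f); whenever d x = c y, d(add x y) = d y and c(add x y) = c x; add (z (c x)) x = x = add x (z (d x)); add is associative on composable triples; d(z⁺ f) = f, c(z⁺ f) = 1, d(z₋ f) = 1, c(z₋ f) = f, and z f = add (z₋ f) (z⁺ f) for all f ∈ M (splitting of identities). Let A = { a ∈ H | d a = 1 and c a = 1 } with inclusion k : A → H, and suppose q : H → A satisfies: q(k a) = a for all a ∈ A; add (z₋ (c x)) (add (k (q x)) (z⁺ (d x))) = x for all x ∈ H; k(q(z₋ g)) = z 1 = k(q(z⁺ f)) for all f, g ∈ M; and k(q(add x y)) = add (k (q x)) (k (q y)) whenever d x = c y. Then the maps α : H → M × A × M, α(x) = (c x, q x, d x), and β : M × A × M → H, β(g,a,f) = add (z₋ g) (add (k a) (z⁺ f)), are mutually inverse bijections. -/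
/-- Given a 2-cell structure `(H, d, c, z, add)` over a monoid `M` (viewed as a
one-object category) whose identity 2-cells split as `z f = add (zm f) (zp f)`
with `zp f : f ⇒ 1` and `zm f : 1 ⇒ f`, and given a retraction `q` of the
inclusion `k` of `A = {a : H | d a = 1 ∧ c a = 1}` satisfying the listed
compatibility conditions, the maps `α x = (c x, q x, d x)` and
`β (g, a, f) = add (zm g) (add (k a) (zp f))` are mutually inverse bijections
between `H` and `M × A × M`. -/
theorem two_cell_structure_equiv_semibimodule {M H : Type*} [Monoid M]
    (d c : H → M) (z zm zp : M → H) (add : H → H → H)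
    (hzd : ∀ f, d (z f) = f) (hzc : ∀ f, c (z f) = f)
    (haddd : ∀ x y, d x = c y → d (add x y) = d y)
    (haddc : ∀ x y, d x = c y → c (add x y) = c x)
    (hlu : ∀ x, add (z (c x)) x = x) (hru : ∀ x, add x (z (d x)) = x)
    (hassoc : ∀ x y w, d x = c y → d y = c w → add x (add y w) = add (add x y) w)
    (hzpd : ∀ f, d (zp f) = f) (hzpc : ∀ f, c (zp f) = 1)
    (hzmd : ∀ f, d (zm f) = 1) (hzmc : ∀ f, c (zm f) = f)
    (hsplit : ∀ f, z f = add (zm f) (zp f))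
    (q : H → {a : H // d a = 1 ∧ c a = 1})
    (hqk : ∀ a : {a : H // d a = 1 ∧ c a = 1}, q a.val = a)
    (hq : ∀ x : H, add (zm (c x)) (add (q x).val (zp (d x))) = x)
    (hqzm : ∀ g : M, (q (zm g)).val = z 1)
    (hqzp : ∀ f : M, (q (zp f)).val = z 1)
    (hqadd : ∀ x y : H, d x = c y → (q (add x y)).val = add (q x).val (q y).val) :
    let A := {a : H // d a = 1 ∧ c a = 1}
    let α : H → M × A × M := fun x => (c x, q x, d x)
    let β : M × A × M → H := fun p => add (zm p.1) (add p.2.1.val (zp p.2.2))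
    (∀ x : H, β (α x) = x) ∧ (∀ p : M × A × M, α (β p) = p) := by
  intro A α β
  refine ⟨hq, ?_⟩
  rintro ⟨g, a, f⟩
  have h1 : d a.val = c (zp f) := by rw [a.2.1, hzpc]
  have h2 : d (zm g) = c (add a.val (zp f)) := by rw [hzmd, haddc _ _ h1, a.2.2]
  have e1 : c (add (zm g) (add a.val (zp f))) = g := by rw [haddc _ _ h2, hzmc]
  have e2 : d (add (zm g) (add a.val (zp f))) = f := by
    rw [haddd _ _ h2, haddd _ _ h1, hzpd]
  have r : add a.val (z 1) = a.val := by
    have h := hru a.val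
    rwa [a.2.1] at h
  have l : add (z 1) a.val = a.val := by
    have h := hlu a.val
    rwa [a.2.2] at h
  have e3 : q (add (zm g) (add a.val (zp f))) = a := by
    apply Subtype.ext
    rw [hqadd _ _ h2, hqadd _ _ h1, hqzm, hqzp, hqk, r, l]
  exact Prod.ext e1 (Prod.ext e3 e2)
end
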